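/- arXiv:math/0511085 — 2 statements merged into one kernel-verified Lean document; each statement's English description precedes it below -/
import Mathlib

section
/- Let p be a prime. Let μ⁺ be the Haar measure on the additive group ℚ_p normalized so that μ⁺(ℤ_p) = 1, and let μ^× be the Haar measure on the locally compact multiplicative group ℚ_pˣ normalized so that μ^×(ℤ_pˣ) = 1. Then for every Borel set A ⊆ ℚ_pˣ one has μ⁺(A) = (1 − 1/p) · ∫_A |x|_p dμ^×(x), where |·|_p is the p-adic absolute value. Equivalently, dμ⁺(x) = (1 − p⁻¹)|x|_p dμ^×(x) on ℚ_pˣ. -/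
/-!
The pullback `λ` of `μ⁺` to `ℚ_pˣ` scales by `|a|_p` under multiplication by `a`, because the
factor by which multiplication by `a` scales a Haar measure of `ℚ_p` is multiplicative in `a`, is
`1` when `|a|_p = 1` (such `a` preserves `ℤ_p`), and is `1/p` when `a = p`: the ring `ℤ_p` is the
disjoint union of the `p` translates `n + pℤ_p`, `0 ≤ n < p` (`measure_openBall`). This is
`distribHaarChar_eq_nnnorm`.

Hence `|u|_p⁻¹ dλ(u)` is a multiplicatively invariant measure on `ℚ_pˣ`
(`isMulLeftInvariant_unitsDensity`). By uniqueness of Haar measure it is a multiple of `μ^×`, and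
the constant is `λ(ℤ_pˣ) = μ⁺(ℤ_p) − μ⁺(pℤ_p) = 1 − 1/p`.
-/

open MeasureTheory

noncomputable instance (p : ℕ) [Fact p.Prime] : MeasurableSpace ℚ_[p] := borel _
instance (p : ℕ) [Fact p.Prime] : BorelSpace ℚ_[p] := ⟨rfl⟩
noncomputable instance (p : ℕ) [Fact p.Prime] : MeasurableSpace ℚ_[p]ˣ := borel _
instance (p : ℕ) [Fact p.Prime] : BorelSpace ℚ_[p]ˣ := ⟨rfl⟩

open scoped Pointwise ENNReal NNReal

section

variable {p : ℕ} [Fact p.Prime]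

/-- The closed unit ball `ℤ_p` is the disjoint union of `p` translates of the open unit ball,
so the latter has measure `1/p`. -/
lemma measure_openBall (μ : Measure ℚ_[p]) [μ.IsAddLeftInvariant]
    (h : μ {x : ℚ_[p] | ‖x‖ ≤ 1} = 1) : μ {x : ℚ_[p] | ‖x‖ < 1} = (p : ℝ≥0∞)⁻¹ := by
  have hB : MeasurableSet {x : ℚ_[p] | ‖x‖ < 1} :=
    (isOpen_lt continuous_norm continuous_const).measurableSet
  have hU : {x : ℚ_[p] | ‖x‖ ≤ 1} =
      ⋃ n ∈ Finset.range p, (fun x : ℚ_[p] => -(n : ℚ_[p]) + x) ⁻¹' {x | ‖x‖ < 1} := by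
    ext x
    simp only [Set.mem_ofPred_eq, Set.mem_iUnion, Set.mem_preimage, Finset.mem_range, exists_prop]
    constructor
    · intro hx
      have hr := PadicInt.norm_sub_zmodRepr_lt_one (⟨x, hx⟩ : ℤ_[p])
      refine ⟨_, PadicInt.zmodRepr_lt_p ⟨x, hx⟩, ?_⟩
      rw [PadicInt.norm_def] at hr
      rwa [neg_add_eq_sub]
    · rintro ⟨n, -, hn⟩
      have hx : x = n + (-(n : ℚ_[p]) + x) := by ring
      rw [hx]
      exact (Padic.nonarchimedean _ _).trans
        (max_le (by simpa using Padic.norm_int_le_one (p := p) n) hn.le)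
  have hd : Set.PairwiseDisjoint (↑(Finset.range p))
      fun n : ℕ => (fun x : ℚ_[p] => -(n : ℚ_[p]) + x) ⁻¹' {x | ‖x‖ < 1} := by
    intro m hm n hn hmn
    refine Set.disjoint_left.2 fun x hxm hxn => hmn ?_
    simp only [Set.mem_preimage, Set.mem_ofPred_eq] at hxm hxn
    have hlt : ‖(((m : ℤ) - n : ℤ) : ℚ_[p])‖ < 1 := by
      have he : (((m : ℤ) - n : ℤ) : ℚ_[p]) = (-(n : ℚ_[p]) + x) - (-(m : ℚ_[p]) + x) := by
        push_cast; ring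
      rw [he, sub_eq_add_neg]
      refine (Padic.nonarchimedean _ _).trans_lt (max_lt hxn ?_)
      rwa [norm_neg]
    rw [Padic.norm_intCast_lt_one_iff] at hlt
    simp only [Finset.coe_range, Set.mem_Iio] at hm hn
    have := Int.eq_zero_of_abs_lt_dvd hlt (by rw [abs_lt]; omega)
    omega
  rw [hU, measure_biUnion_finset hd fun n _ => hB.preimage (measurable_const_add _)] at h
  simp only [measure_preimage_add, Finset.sum_const, Finset.card_range, nsmul_eq_mul] at h
  exact ENNReal.eq_inv_of_mul_eq_one_left (by rwa [mul_comm])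

/-- Multiplication by `u` scales the Haar measures of `ℚ_p` by `|u|_p`. -/
lemma distribHaarChar_eq_nnnorm (μ : Measure ℚ_[p]) [μ.IsAddHaarMeasure] [μ.Regular]
    (h : μ {x : ℚ_[p] | ‖x‖ ≤ 1} = 1) (u : ℚ_[p]ˣ) :
    distribHaarChar ℚ_[p] u = ‖(u : ℚ_[p])‖₊ := by
  have hp0 : (p : ℚ_[p]) ≠ 0 := by exact_mod_cast (Fact.out : p.Prime).ne_zero
  have hp1 : (0 : ℝ) < p := by exact_mod_cast (Fact.out : p.Prime).pos
  have hmem (g : ℚ_[p]ˣ) (x : ℚ_[p]) :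
      x ∈ g • {x : ℚ_[p] | ‖x‖ ≤ 1} ↔ ‖x‖ ≤ ‖(g : ℚ_[p])‖ := by
    have hg : 0 < ‖(g : ℚ_[p])‖ := norm_pos_iff.2 g.ne_zero
    rw [Set.mem_smul_set_iff_inv_smul_mem, Set.mem_ofPred_eq, Units.smul_def, smul_eq_mul, norm_mul,
      Units.val_inv_eq_inv_val, norm_inv, inv_mul_le_iff₀ hg, mul_one]
  have hunit (w : ℚ_[p]ˣ) (hw : ‖(w : ℚ_[p])‖ = 1) : distribHaarChar ℚ_[p] w = 1 := by
    have hs : w • {x : ℚ_[p] | ‖x‖ ≤ 1} = {x : ℚ_[p] | ‖x‖ ≤ 1} := by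
      ext x
      rw [hmem, hw, Set.mem_ofPred_eq]
    refine distribHaarChar_eq_of_measure_smul_eq_mul (μ := μ) (s := {x : ℚ_[p] | ‖x‖ ≤ 1})
      (by simp [h]) (by simp [h]) ?_
    rw [hs]; simp
  have hprime : distribHaarChar ℚ_[p] (Units.mk0 (p : ℚ_[p]) hp0) = (p : ℝ≥0)⁻¹ := by
    have hs : Units.mk0 (p : ℚ_[p]) hp0 • {x : ℚ_[p] | ‖x‖ ≤ 1} = {x : ℚ_[p] | ‖x‖ < 1} := by
      ext x
      rw [hmem, Units.val_mk0, Padic.norm_p, Set.mem_ofPred_eq]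
      simpa using Padic.norm_le_pow_iff_norm_lt_pow_add_one x (-1)
    refine distribHaarChar_eq_of_measure_smul_eq_mul (μ := μ) (s := {x : ℚ_[p] | ‖x‖ ≤ 1})
      (by simp [h]) (by simp [h]) ?_
    rw [hs, measure_openBall μ h, h, mul_one, ENNReal.coe_inv, ENNReal.coe_natCast]
    exact_mod_cast (Fact.out : p.Prime).ne_zero
  set v := (u : ℚ_[p]).valuation
  have hnorm : ‖(u : ℚ_[p])‖ = (p : ℝ) ^ (-v) := Padic.norm_eq_zpow_neg_valuation u.ne_zero
  have hw := hunit (u * Units.mk0 (p : ℚ_[p]) hp0 ^ (-v)) (by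
    rw [Units.val_mul, norm_mul, hnorm, Units.val_zpow_eq_zpow_val, Units.val_mk0, norm_zpow,
      Padic.norm_p, inv_zpow, mul_inv_cancel₀ (zpow_pos hp1 _).ne'])
  have hu : u = (u * Units.mk0 (p : ℚ_[p]) hp0 ^ (-v)) * Units.mk0 (p : ℚ_[p]) hp0 ^ v := by
    rw [mul_assoc, ← zpow_add]; simp
  rw [hu, map_mul, hw, one_mul, map_zpow, hprime, ← hu]
  apply NNReal.coe_injective
  rw [coe_nnnorm, hnorm]
  simp

/-- The measure `|u|_p⁻¹ dμ(u)` on `ℚ_pˣ`, where `μ` is pulled back along `ℚ_pˣ ⊆ ℚ_p`. -/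
noncomputable def unitsDensity (μ : Measure ℚ_[p]) : Measure ℚ_[p]ˣ :=
  (μ.comap Units.val).withDensity fun u => (‖(u : ℚ_[p])‖₊⁻¹ : ℝ≥0)

lemma measurableEmbedding_unitsVal : MeasurableEmbedding (Units.val : ℚ_[p]ˣ → ℚ_[p]) :=
  Units.isOpenEmbedding_val.measurableEmbedding

lemma continuous_nnnorm_inv :
    Continuous fun u : ℚ_[p]ˣ => (‖(u : ℚ_[p])‖₊⁻¹ : ℝ≥0) :=
  (Units.continuous_val.nnnorm).inv₀ fun u => by simp

lemma isMulLeftInvariant_unitsDensity (μ : Measure ℚ_[p]) [μ.IsAddHaarMeasure] [μ.Regular]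
    (h : μ {x : ℚ_[p] | ‖x‖ ≤ 1} = 1) : (unitsDensity μ).IsMulLeftInvariant := by
  rw [← forall_measure_preimage_mul_iff]
  intro g A hA
  have hn : ‖(g : ℚ_[p])‖₊ ≠ 0 := by simp
  have hf : Measurable fun u : ℚ_[p]ˣ => ((‖(u : ℚ_[p])‖₊⁻¹ : ℝ≥0) : ℝ≥0∞) :=
    continuous_nnnorm_inv.measurable.coe_nnreal_ennreal
  have hmap : (μ.comap Units.val).map (g * ·) = (‖(g : ℚ_[p])‖₊⁻¹ : ℝ≥0) • μ.comap Units.val := by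
    ext s hs
    rw [Measure.map_apply (measurable_const_mul g) hs, Measure.smul_apply,
      measurableEmbedding_unitsVal.comap_apply, measurableEmbedding_unitsVal.comap_apply]
    have hi : Units.val '' ((g * ·) ⁻¹' s) = g⁻¹ • (Units.val '' s : Set ℚ_[p]) := by
      ext x
      simp only [Set.mem_image, Set.mem_preimage, Set.mem_smul_set]
      constructor
      · rintro ⟨y, hy, rfl⟩
        exact ⟨_, ⟨_, hy, rfl⟩, by simp [Units.smul_def]⟩
      · rintro ⟨_, ⟨y, hy, rfl⟩, rfl⟩
        exact ⟨g⁻¹ * y, by simpa using hy, by simp [Units.smul_def]⟩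
    rw [hi, ← distribHaarChar_mul, distribHaarChar_eq_nnnorm μ h, Units.val_inv_eq_inv_val,
      nnnorm_inv]
    rfl
  have hpre : MeasurableSet ((g * ·) ⁻¹' A) := hA.preimage (measurable_const_mul g)
  rw [unitsDensity, withDensity_apply _ hpre, withDensity_apply _ hA]
  calc ∫⁻ u in (g * ·) ⁻¹' A, ((‖(u : ℚ_[p])‖₊⁻¹ : ℝ≥0) : ℝ≥0∞) ∂μ.comap Units.val
      = ∫⁻ u in (g * ·) ⁻¹' A, (‖(g : ℚ_[p])‖₊ : ℝ≥0∞) *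
          ((‖((g * u : ℚ_[p]ˣ) : ℚ_[p])‖₊⁻¹ : ℝ≥0) : ℝ≥0∞) ∂μ.comap Units.val := by
        congr with u
        rw [← ENNReal.coe_mul, Units.val_mul, nnnorm_mul, mul_inv, mul_inv_cancel_left₀ hn]
    _ = ‖(g : ℚ_[p])‖₊ * ∫⁻ u in A, ((‖(u : ℚ_[p])‖₊⁻¹ : ℝ≥0) : ℝ≥0∞)
          ∂(μ.comap Units.val).map (g * ·) := by
        rw [setLIntegral_map hA hf (measurable_const_mul g),
          lintegral_const_mul' _ _ ENNReal.coe_ne_top]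
    _ = _ := by
        rw [hmap, Measure.restrict_smul, lintegral_smul_measure, ENNReal.smul_def, smul_eq_mul,
          ← mul_assoc, ← ENNReal.coe_mul, mul_inv_cancel₀ hn, ENNReal.coe_one, one_mul]

end

/-- Let `μ⁺` be the Haar measure on `(ℚ_p, +)` with `μ⁺(ℤ_p) = 1` and
`μ^×` the Haar measure on `ℚ_pˣ` with `μ^×(ℤ_pˣ) = 1`. Then for every Borel set
`A ⊆ ℚ_pˣ`, `μ⁺(A) = (1 − 1/p) ∫_A |x|_p dμ^×(x)`. -/
theorem statement7 (p : ℕ) [Fact p.Prime]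
    (μadd : Measure ℚ_[p]) (μmul : Measure ℚ_[p]ˣ)
    (hadd0 : μadd ≠ 0) (haddinv : μadd.IsAddLeftInvariant) (haddreg : μadd.Regular)
    (haddZ : μadd {x : ℚ_[p] | ‖x‖ ≤ 1} = 1)
    (hmul0 : μmul ≠ 0) (hmulinv : μmul.IsMulLeftInvariant) (hmulreg : μmul.Regular)
    (hmulZ : μmul {u : ℚ_[p]ˣ | ‖(u : ℚ_[p])‖ = 1} = 1) :
    ∀ A : Set ℚ_[p]ˣ, MeasurableSet A →
      μadd ((fun u : ℚ_[p]ˣ => (u : ℚ_[p])) '' A) =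
        ENNReal.ofReal (1 - 1 / (p : ℝ)) *
          ∫⁻ u in A, ENNReal.ofReal ‖(u : ℚ_[p])‖ ∂μmul := by
  intro A hA
  have : NeZero μadd := ⟨hadd0⟩
  have : NeZero μmul := ⟨hmul0⟩
  have : μadd.IsOpenPosMeasure := isOpenPosMeasure_of_addLeftInvariant_of_regular
  have : μmul.IsOpenPosMeasure := isOpenPosMeasure_of_mulLeftInvariant_of_regular
  have : μadd.IsAddHaarMeasure := {}
  have : μmul.IsHaarMeasure := {}
  have : SecondCountableTopology ℚ_[p]ˣ :=
    Units.isOpenEmbedding_val.isEmbedding.secondCountableTopology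
  have hinv := isMulLeftInvariant_unitsDensity μadd haddZ
  have : IsFiniteMeasureOnCompacts (μadd.comap (Units.val : ℚ_[p]ˣ → ℚ_[p])) :=
    IsFiniteMeasureOnCompacts.comap' μadd Units.continuous_val measurableEmbedding_unitsVal
  have : IsLocallyFiniteMeasure (unitsDensity μadd) :=
    IsLocallyFiniteMeasure.withDensity_coe continuous_nnnorm_inv
  have hm : Measurable fun u : ℚ_[p]ˣ => ((‖(u : ℚ_[p])‖₊⁻¹ : ℝ≥0) : ℝ≥0∞) :=
    continuous_nnnorm_inv.measurable.coe_nnreal_ennreal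
  have huniq := Measure.isMulLeftInvariant_eq_smul (unitsDensity μadd) μmul
  set c := (unitsDensity μadd).haarScalarFactor μmul
  have hUmeas : MeasurableSet {u : ℚ_[p]ˣ | ‖(u : ℚ_[p])‖ = 1} :=
    (isClosed_eq Units.continuous_val.norm continuous_const).measurableSet
  -- Evaluating both measures on `ℤ_pˣ` determines the constant.
  have hc : (c : ℝ≥0∞) = ENNReal.ofReal (1 - 1 / (p : ℝ)) := by
    have h1 : unitsDensity μadd {u : ℚ_[p]ˣ | ‖(u : ℚ_[p])‖ = 1} = c := by
      rw [huniq, Measure.smul_apply, hmulZ, ENNReal.smul_def, smul_eq_mul, mul_one]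
    have hone : ∫⁻ u in {u : ℚ_[p]ˣ | ‖(u : ℚ_[p])‖ = 1}, ((‖(u : ℚ_[p])‖₊⁻¹ : ℝ≥0) : ℝ≥0∞)
        ∂μadd.comap Units.val =
        ∫⁻ u in {u : ℚ_[p]ˣ | ‖(u : ℚ_[p])‖ = 1}, 1 ∂μadd.comap Units.val := by
      refine setLIntegral_congr_fun hUmeas fun u hu => ?_
      have : ‖(u : ℚ_[p])‖₊ = 1 := NNReal.coe_injective hu
      simp [this]
    have himg : Units.val '' {u : ℚ_[p]ˣ | ‖(u : ℚ_[p])‖ = 1} =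
        {x : ℚ_[p] | ‖x‖ ≤ 1} \ {x | ‖x‖ < 1} := by
      ext x
      simp only [Set.mem_image, Set.mem_ofPred_eq, Set.mem_sdiff, not_lt]
      constructor
      · rintro ⟨u, hu, rfl⟩
        exact ⟨hu.le, hu.ge⟩
      · rintro ⟨h1, h2⟩
        have hx : x ≠ 0 := norm_pos_iff.1 (one_pos.trans_le h2)
        exact ⟨Units.mk0 x hx, le_antisymm h1 h2, rfl⟩
    have hB : MeasurableSet {x : ℚ_[p] | ‖x‖ < 1} :=
      (isOpen_lt continuous_norm continuous_const).measurableSet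
    have hp1 : (0 : ℝ) < p := by exact_mod_cast (Fact.out : p.Prime).pos
    have hBm := measure_openBall μadd haddZ
    have hsub : {x : ℚ_[p] | ‖x‖ < 1} ⊆ {x | ‖x‖ ≤ 1} := fun x (hx : ‖x‖ < 1) => hx.le
    rw [← h1, unitsDensity, withDensity_apply _ hUmeas, hone, setLIntegral_one,
      measurableEmbedding_unitsVal.comap_apply, himg,
      measure_sdiff hsub hB.nullMeasurableSet
        (by rw [hBm]; simpa using (Fact.out : p.Prime).ne_zero), haddZ, hBm,
      ENNReal.ofReal_sub _ (by positivity), ENNReal.ofReal_one, one_div,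
      ENNReal.ofReal_inv_of_pos hp1, ENNReal.ofReal_natCast]
  have hback := withDensity_inv_same (μ := μadd.comap (Units.val : ℚ_[p]ˣ → ℚ_[p])) hm
    (.of_forall fun u => by simp) (.of_forall fun u => ENNReal.coe_ne_top)
  change (unitsDensity μadd).withDensity _ = _ at hback
  calc μadd (Units.val '' A) = μadd.comap Units.val A :=
        (measurableEmbedding_unitsVal.comap_apply _ _).symm
    _ = ∫⁻ u in A, ENNReal.ofReal ‖(u : ℚ_[p])‖ ∂unitsDensity μadd := by
        rw [← hback, withDensity_apply _ hA]
        congr with u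
        rw [ENNReal.coe_inv (by simp), inv_inv, ofReal_norm, enorm_eq_nnnorm]
    _ = _ := by
        rw [huniq, Measure.restrict_smul, lintegral_smul_measure, ENNReal.smul_def, smul_eq_mul,
          hc]
end

section
/- Let S be an infinite set of prime numbers. Let A_Sˣ denote the restricted product ∏'_{p∈S}(ℚ_pˣ, ℤ_pˣ) and let K_S denote the restricted product ∏'_{p∈S}(ℚ_pˣ, 1+pℤ_p). Let g = (g_p) ∈ A_Sˣ and s = (s_p) ∈ K_S be such that g_p(s_p − 1) + 1 ≠ 0 for every p ∈ S. Then the family α_g(s) := (g_p(s_p − 1) + 1)_{p∈S} belongs to K_S, and the family β_s(g) := (g_p s_p / (g_p(s_p − 1) + 1))_{p∈S} belongs to A_Sˣ; that is, for all but finitely many p one has g_p(s_p − 1) + 1 ∈ 1 + pℤ_p and g_p s_p/(g_p(s_p−1)+1) ∈ ℤ_pˣ. -/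
/-!
Away from the finitely many `p` where `g_p ∉ ℤ_pˣ` or `s_p ∉ 1 + pℤ_p`, one has
`‖g_p (s_p - 1)‖ = ‖s_p - 1‖ ≤ 1/p`, so `g_p (s_p - 1) + 1` lies in `1 + pℤ_p`. Elements of
`1 + pℤ_p` have norm one by the ultrametric inequality (`norm_eq_one_of_norm_sub_one_le`), so
`g_p`, `s_p` and the denominator are all units, and hence so is `g_p s_p / (g_p (s_p - 1) + 1)`.
-/

instance (q : Nat.Primes) : Fact (q : ℕ).Prime := ⟨q.2⟩

/-- `1 + pℤ_p` is contained in `ℤ_pˣ`. -/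
theorem norm_eq_one_of_norm_sub_one_le (p : ℕ) [hp : Fact p.Prime] (x : ℚ_[p])
    (hx : ‖x - 1‖ ≤ (p : ℝ)⁻¹) : ‖x‖ = 1 := by
  have hlt : ‖x - 1‖ < 1 :=
    hx.trans_lt (inv_lt_one_of_one_lt₀ (by exact_mod_cast hp.out.one_lt))
  have hne : ‖x - 1‖ ≠ ‖(1 : ℚ_[p])‖ := by
    rw [norm_one]
    exact hlt.ne
  have hmax := Padic.add_eq_max_of_ne hne
  rwa [sub_add_cancel, norm_one, max_eq_right hlt.le] at hmax

/-- Let `g ∈ A_Sˣ = ∏'_{p∈S}(ℚ_pˣ, ℤ_pˣ)` and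
`s ∈ K_S = ∏'_{p∈S}(ℚ_pˣ, 1+pℤ_p)` with `g_p(s_p−1)+1 ≠ 0` for all `p ∈ S`. Then
`α_g(s) = (g_p(s_p−1)+1)_p` belongs to `K_S` and `β_s(g) = (g_p s_p/(g_p(s_p−1)+1))_p`
belongs to `A_Sˣ`: all components are nonzero, for all but finitely many `p` one has
`g_p(s_p−1)+1 ∈ 1+pℤ_p` and `g_p s_p/(g_p(s_p−1)+1) ∈ ℤ_pˣ`. -/
theorem statement15 (S : Set Nat.Primes) (hS : S.Infinite)
    (g s : ∀ q : S, ℚ_[(q.1 : ℕ)])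
    (hg0 : ∀ q : S, g q ≠ 0) (hg1 : {q : S | ‖g q‖ ≠ 1}.Finite)
    (hs0 : ∀ q : S, s q ≠ 0)
    (hs1 : {q : S | ¬ ‖s q - 1‖ ≤ (((q.1 : ℕ) : ℝ))⁻¹}.Finite)
    (h : ∀ q : S, g q * (s q - 1) + 1 ≠ 0) :
    (∀ q : S, g q * (s q - 1) + 1 ≠ 0) ∧
    {q : S | ¬ ‖(g q * (s q - 1) + 1) - 1‖ ≤ (((q.1 : ℕ) : ℝ))⁻¹}.Finite ∧
    (∀ q : S, g q * s q / (g q * (s q - 1) + 1) ≠ 0) ∧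
    {q : S | ‖g q * s q / (g q * (s q - 1) + 1)‖ ≠ 1}.Finite := by
  have key : ∀ q : S, ‖g q‖ = 1 → ‖s q - 1‖ ≤ (((q.1 : ℕ) : ℝ))⁻¹ →
      ‖(g q * (s q - 1) + 1) - 1‖ ≤ (((q.1 : ℕ) : ℝ))⁻¹ := by
    intro q hg hs
    rwa [add_sub_cancel_right, norm_mul, hg, one_mul]
  refine ⟨h, (hg1.union hs1).subset ?_,
    fun q => div_ne_zero (mul_ne_zero (hg0 q) (hs0 q)) (h q), (hg1.union hs1).subset ?_⟩
  · intro q hq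
    by_contra hn
    simp only [Set.mem_union, Set.mem_ofPred_eq, not_or, not_not] at hn
    exact hq (key q hn.1 hn.2)
  · intro q hq
    by_contra hn
    simp only [Set.mem_union, Set.mem_ofPred_eq, not_or, not_not] at hn
    apply hq
    rw [norm_div, norm_mul, hn.1, norm_eq_one_of_norm_sub_one_le _ _ hn.2,
      norm_eq_one_of_norm_sub_one_le _ _ (key q hn.1 hn.2)]
    norm_num
end
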